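/- Let p ≥ 2 be an integer and let w ∈ X^ℕ be any infinite word over X = {0,1,…,p}. Let H = ℓ²(Orb(w); ℂ) and let T : H → H be the bounded linear operator (the adjacency operator of the orbital Schreier graph Γ_w) defined by (Tf)(v) = Σ_{i=1}^p ( f(E_i(v)) + f(E_i^{-1}(v)) ) for v ∈ Orb(w). Then T is self-adjoint and its spectrum, as a subset of ℝ, equals the closure of ⋃_{n≥0} {λ ∈ ℝ : f_p^{∘n}(λ) = 2(p−1)}, where f_p(λ) = λ² − 2(p−1)λ − 2p and f_p^{∘n} is its n-fold iterate. -/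

import Mathlib

open scoped Classical

/-- The action of the generator `e_i` of the star automaton group `𝒢_{S_p}` on the
boundary of the rooted `(p+1)`-ary tree, i.e. on infinite words over `X = {0,…,p}`:
`E_i(0^∞) = i^∞`; `E_i(0^k i u) = i^k 0 u`; `E_i(0^k j u) = i^k j u` for `j ∉ {0, i}`. -/
noncomputable def Ebd (p : ℕ) (i : Fin (p + 1)) (w : ℕ → Fin (p + 1)) : ℕ → Fin (p + 1) := by
  classical
  exact
    if h : ∃ k, w k ≠ 0 then
      if w (Nat.find h) = i then
        fun m => if m < Nat.find h then i else if m = Nat.find h then 0 else w m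
      else fun m => if m < Nat.find h then i else w m
    else fun _ => i

/-- One step of the action of the generators `E_1, …, E_p` (or their inverses). -/
def StarStep (p : ℕ) (u v : ℕ → Fin (p + 1)) : Prop :=
  ∃ i : Fin p, Ebd p i.succ u = v ∨ Ebd p i.succ v = u

/-- The orbit `Orb(w)` of `w` under the group generated by `E_1, …, E_p`. -/
def StarOrbit (p : ℕ) (w : ℕ → Fin (p + 1)) : Set (ℕ → Fin (p + 1)) :=
  {v | Relation.ReflTransGen (StarStep p) w v}

/-- Two infinite words are cofinal if they differ in only finitely many positions. -/
def Cofinal {p : ℕ} (u v : ℕ → Fin (p + 1)) : Prop :=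
  {j : ℕ | u j ≠ v j}.Finite

/-- The quadratic map `f_p(λ) = λ² − 2(p−1)λ − 2p`. -/
noncomputable def fp (p : ℕ) : ℝ → ℝ := fun x => x ^ 2 - 2 * ((p : ℝ) - 1) * x - 2 * p

/-!
The words of `Orb(w)` form stars: the word `0 u` is a root, with leaves `i u` for `1 ≤ i ≤ p`,
where `u` runs through the orbit of the tail `w'` of `w`. Since `E_i` sends `i u` to `0 u`, sends
`0 u` to `i E_i(u)` and fixes the other leaves, the adjacency operator `T_w` is a block matrix
`[[0, C*], [C, c]]` over roots and leaves, with `c = 2(p - 1)` and `C* C = T_{w'} + 2p`. A Schur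
complement then shows, for `z ≠ c`, that `z` is in the spectrum of `T_w` if and only if
`z (z - c) - 2p = f_p(z)` is in the spectrum of `T_{w'}`, and for `p ≥ 2` the value `c` is always an
eigenvalue. Hence every `f_p`-preimage of `c` lies in the spectrum, whereas any other spectral value
has its whole forward `f_p`-orbit in `[-2p, 2p]`. There the inverse branches of `f_p` contract by
`1/2`, so pulling `c` back along such an orbit produces preimages of `c` close to its starting
point.
-/

section EllTwo

open ContinuousLinearMap
open scoped lp

variable {𝕜 α β : Type*} [RCLike 𝕜]

lemma orthonormal_lp_single :
    Orthonormal 𝕜 fun a : α => (lp.single 2 a 1 : ℓ²(α, 𝕜)) := by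
  refine orthonormal_iff_ite.2 fun a b => ?_
  simp [lp.inner_single_left, Pi.single_apply]

lemma clm_ext_lp_single {E : Type*} [AddCommMonoid E] [TopologicalSpace E]
    [T2Space E] [Module 𝕜 E] {A B : ℓ²(α, 𝕜) →L[𝕜] E}
    (h : ∀ a, A (lp.single 2 a 1) = B (lp.single 2 a 1)) : A = B := by
  refine lp.ext_continuousLinearMap ENNReal.ofNat_ne_top fun a => ?_
  ext
  exact h a

variable (𝕜) in
/-- The isometry `ℓ²(α) → ℓ²(β)` that transports functions along `φ` and extends them by zero;
its adjoint is composition with `φ`. -/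
noncomputable def l2Extend (φ : α ↪ β) : ℓ²(α, 𝕜) →L[𝕜] ℓ²(β, 𝕜) :=
  ((orthonormal_lp_single.comp φ φ.injective).orthogonalFamily.linearIsometry).toContinuousLinearMap

@[simp]
lemma l2Extend_single (φ : α ↪ β) (a : α) :
    l2Extend 𝕜 φ (lp.single 2 a 1) = lp.single 2 (φ a) 1 := by
  simp [l2Extend]

lemma norm_l2Extend_le (φ : α ↪ β) : ‖l2Extend 𝕜 φ‖ ≤ 1 :=
  LinearIsometry.norm_toContinuousLinearMap_le _

lemma adjoint_l2Extend_apply (φ : α ↪ β) (f : ℓ²(β, 𝕜)) (a : α) :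
    adjoint (l2Extend 𝕜 φ) f a = f (φ a) := by
  have h := adjoint_inner_right (l2Extend 𝕜 φ) (lp.single 2 a 1) f
  simpa [lp.inner_single_left] using h

@[simp]
lemma adjoint_l2Extend_single (φ : α ↪ β) (a : α) :
    adjoint (l2Extend 𝕜 φ) (lp.single 2 (φ a) 1) = lp.single 2 a 1 := by
  ext b
  simp [adjoint_l2Extend_apply, Pi.single_apply]

lemma adjoint_l2Extend_single_of_ne {φ : α ↪ β} {b : β} (h : ∀ a, b ≠ φ a) :
    adjoint (l2Extend 𝕜 φ) (lp.single 2 b 1) = 0 := by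
  ext a
  simp [adjoint_l2Extend_apply, (h a).symm]

lemma adjoint_l2Extend_comp_self (φ : α ↪ β) :
    adjoint (l2Extend 𝕜 φ) ∘L l2Extend 𝕜 φ = 1 :=
  clm_ext_lp_single fun a => by simp

lemma adjoint_l2Extend_equiv (σ : α ≃ β) :
    adjoint (l2Extend 𝕜 σ.toEmbedding) = l2Extend 𝕜 σ.symm.toEmbedding :=
  clm_ext_lp_single fun b => by
    ext a
    simp [adjoint_l2Extend_apply, Pi.single_apply, Equiv.eq_symm_apply]

end EllTwo

section Schur

open ContinuousLinearMap

variable {𝕜 H K : Type*} [Field 𝕜]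
  [AddCommGroup H] [Module 𝕜 H] [TopologicalSpace H] [IsTopologicalAddGroup H]
  [AddCommGroup K] [Module 𝕜 K] [TopologicalSpace K]

lemma isUnit_one_add_comp_of_comp_eq_zero {A : H →L[𝕜] K} {B : K →L[𝕜] H} (h : A ∘L B = 0) :
    IsUnit (1 + B ∘L A) := by
  refine IsNilpotent.isUnit_one_add ⟨2, ?_⟩
  ext f
  simpa [pow_two] using congr(B ($h (A f)))

variable [ContinuousConstSMul 𝕜 H] {J : K →L[𝕜] H} {P : H →L[𝕜] K}

lemma isUnit_comp_comp_add_smul_iff (hPJ : P ∘L J = 1) (A : K →L[𝕜] K) {y : 𝕜} (hy : y ≠ 0) :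
    IsUnit (J ∘L A ∘L P + y • (1 - J ∘L P)) ↔ IsUnit A := by
  have hPJ' : ∀ g, P (J g) = g := fun g => congr($hPJ g)
  constructor
  · intro h
    obtain ⟨R, hR, hR'⟩ := isUnit_iff_exists.1 h
    refine isUnit_iff_exists.2 ⟨P ∘L R ∘L J, ?_, ?_⟩
    · ext g
      simpa [hPJ'] using congr(P ($hR (J g)))
    · ext g
      simpa [hPJ'] using congr(P ($hR' (J g)))
  · intro h
    obtain ⟨R, hR, hR'⟩ := isUnit_iff_exists.1 h
    have hAR : ∀ g, A (R g) = g := fun g => congr($hR g)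
    have hRA : ∀ g, R (A g) = g := fun g => congr($hR' g)
    refine isUnit_iff_exists.2 ⟨J ∘L R ∘L P + y⁻¹ • (1 - J ∘L P), ?_, ?_⟩
    · ext f
      simp [hPJ', hAR, smul_sub, hy]
    · ext f
      simp [hPJ', hRA, smul_sub, hy]

variable [IsTopologicalAddGroup K] [ContinuousConstSMul 𝕜 K]

/-- With respect to `H = range J ⊕ ker P` the operator is the block matrix `[[0, B], [C, c]]`, and
`z (z - c) - B C` is `z - c` times the Schur complement of the lower right corner of
`[[z, -B], [-C, z - c]]`. -/
lemma mem_spectrum_block_iff {B : H →L[𝕜] K} {C : K →L[𝕜] H}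
    (hPJ : P ∘L J = 1) (hBJ : B ∘L J = 0) (hPC : P ∘L C = 0) {c z : 𝕜} (hz : z ≠ c) :
    z ∈ spectrum 𝕜 (J ∘L B + C ∘L P + c • (1 - J ∘L P)) ↔
      z * (z - c) ∈ spectrum 𝕜 (B ∘L C) := by
  obtain ⟨y, rfl⟩ : ∃ y, z = c + y := ⟨z - c, by ring⟩
  have hy : y ≠ 0 := by simpa using hz
  set S : K →L[𝕜] K := algebraMap 𝕜 _ ((c + y) * y) - B ∘L C with hS
  have hL : IsUnit (1 + J ∘L (-y⁻¹ • B)) :=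
    isUnit_one_add_comp_of_comp_eq_zero (by simp [hBJ])
  have hU : IsUnit (1 + (-y⁻¹ • C) ∘L P) :=
    isUnit_one_add_comp_of_comp_eq_zero (by simp [hPC])
  have hLDU : algebraMap 𝕜 _ (c + y) - (J ∘L B + C ∘L P + c • (1 - J ∘L P)) =
      (1 + J ∘L (-y⁻¹ • B)) * (J ∘L (y⁻¹ • S) ∘L P + y • (1 - J ∘L P)) *
        (1 + (-y⁻¹ • C) ∘L P) := by
    have hBJ' : ∀ g, B (J g) = 0 := fun g => congr($hBJ g)
    have hPC' : ∀ g, P (C g) = 0 := fun g => congr($hPC g)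
    ext f
    simp only [hS, add_apply, sub_apply, neg_apply, smul_apply, mul_apply_eq_comp,
      one_apply_eq_self, comp_apply, Algebra.algebraMap_eq_smul_one, map_add,
      map_sub, map_neg, map_smul, map_zero, neg_smul, hBJ', hPC']
    match_scalars <;> field_simp <;> ring
  have hD : IsUnit (J ∘L (y⁻¹ • S) ∘L P + y • (1 - J ∘L P)) ↔ IsUnit S :=
    (isUnit_comp_comp_add_smul_iff hPJ _ hy).trans
      (isUnit_smul_iff (Units.mk0 _ (inv_ne_zero hy)) S)
  rw [add_sub_cancel_left, spectrum.mem_iff, spectrum.mem_iff, hLDU, hU.mul_right_iff,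
    hL.mul_left_iff, hD]

end Schur

section SchreierAdj

open ContinuousLinearMap
open scoped lp

variable {𝕜 ι α β : Type*} [RCLike 𝕜] [Fintype ι]

variable (𝕜) in
/-- The adjacency operator on `ℓ²` of the Schreier graph of a finite family of permutations. -/
noncomputable def schreierAdj (σ : ι → Equiv.Perm α) : ℓ²(α, 𝕜) →L[𝕜] ℓ²(α, 𝕜) :=
  ∑ i, (l2Extend 𝕜 (σ i).toEmbedding + l2Extend 𝕜 (σ i).symm.toEmbedding)

lemma schreierAdj_apply (σ : ι → Equiv.Perm α) (f : ℓ²(α, 𝕜)) (a : α) :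
    schreierAdj 𝕜 σ f a = ∑ i, (f (σ i a) + f ((σ i).symm a)) := by
  have h (τ : Equiv.Perm α) : l2Extend 𝕜 τ.symm.toEmbedding f a = f (τ a) := by
    rw [← adjoint_l2Extend_equiv, adjoint_l2Extend_apply, Equiv.coe_toEmbedding]
  have h' (τ : Equiv.Perm α) : l2Extend 𝕜 τ.toEmbedding f a = f (τ.symm a) := h τ.symm
  rw [schreierAdj, sum_apply, lp.coeFn_sum]
  refine (Finset.sum_apply a _ _).trans (Finset.sum_congr rfl fun i _ => ?_)
  simp only [add_apply, lp.coeFn_add, Pi.add_apply, h, h', add_comm]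

@[simp]
lemma schreierAdj_single (σ : ι → Equiv.Perm α) (a : α) :
    schreierAdj 𝕜 σ (lp.single 2 a 1) =
      ∑ i, (lp.single 2 (σ i a) 1 + lp.single 2 ((σ i).symm a) 1) := by
  simp [schreierAdj, sum_apply]

lemma isSelfAdjoint_schreierAdj (σ : ι → Equiv.Perm α) : IsSelfAdjoint (schreierAdj 𝕜 σ) := by
  have h (τ : Equiv.Perm α) : adjoint (l2Extend 𝕜 τ.symm.toEmbedding) =
      l2Extend 𝕜 τ.toEmbedding := adjoint_l2Extend_equiv τ.symm
  simp only [isSelfAdjoint_iff', schreierAdj, map_sum, map_add, adjoint_l2Extend_equiv, h,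
    add_comm]

lemma norm_schreierAdj_le (σ : ι → Equiv.Perm α) :
    ‖schreierAdj 𝕜 σ‖ ≤ 2 * Fintype.card ι := by
  calc ‖schreierAdj 𝕜 σ‖
      ≤ ∑ i, (‖l2Extend 𝕜 (σ i).toEmbedding‖ + ‖l2Extend 𝕜 (σ i).symm.toEmbedding‖) :=
        (norm_sum_le _ _).trans (Finset.sum_le_sum fun i _ => norm_add_le _ _)
    _ ≤ ∑ _i : ι, (1 + 1) := by
        gcongr <;> exact norm_l2Extend_le _
    _ = 2 * Fintype.card ι := by
        rw [Finset.sum_const, Finset.card_univ, nsmul_eq_mul]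
        ring

lemma norm_le_of_mem_spectrum_schreierAdj {σ : ι → Equiv.Perm α} {z : 𝕜}
    (hz : z ∈ spectrum 𝕜 (schreierAdj 𝕜 σ)) : ‖z‖ ≤ 2 * Fintype.card ι :=
  (spectrum.norm_le_norm_mul_of_mem hz).trans <|
    (mul_le_of_le_one_right (norm_nonneg _) norm_id_le).trans (norm_schreierAdj_le σ)

end SchreierAdj

section StarRecursion

open ContinuousLinearMap
open scoped lp

/-- The permutations `σ` of `α` arise from the permutations `σ'` of `β` by the wreath recursion
of a star automaton: `α` consists of stars indexed by `β`, the star over `b` having the root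
`root b` and the leaves `leaf i b`, and `σ i` moves `leaf i b` to the root of its star, the root
to `leaf i (σ' i b)`, and fixes the other leaves. -/
structure IsStarRecursion {ι α β : Type*} (σ : ι → Equiv.Perm α) (σ' : ι → Equiv.Perm β)
    (root : β ↪ α) (leaf : ι → β ↪ α) : Prop where
  exists_root_or_leaf : ∀ a, (∃ b, root b = a) ∨ ∃ i b, leaf i b = a
  leaf_ne_root : ∀ i b b', leaf i b ≠ root b'
  apply_root : ∀ i b, σ i (root b) = leaf i (σ' i b)
  apply_leaf_self : ∀ i b, σ i (leaf i b) = root b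
  apply_leaf_of_ne : ∀ {i j}, j ≠ i → ∀ b, σ i (leaf j b) = leaf j b

namespace IsStarRecursion

variable {𝕜 ι α β : Type*} [RCLike 𝕜] {σ : ι → Equiv.Perm α} {σ' : ι → Equiv.Perm β}
  {root : β ↪ α} {leaf : ι → β ↪ α}

lemma leaf_ne_leaf (h : IsStarRecursion σ σ' root leaf) {i j : ι} (hij : i ≠ j) (b b' : β) :
    leaf i b ≠ leaf j b' := fun hb => by
  have := congrArg (σ i) hb
  rw [h.apply_leaf_self, h.apply_leaf_of_ne hij.symm] at this
  exact h.leaf_ne_root j b' b this.symm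

lemma symm_apply_root (h : IsStarRecursion σ σ' root leaf) (i : ι) (b : β) :
    (σ i).symm (root b) = leaf i b := by
  rw [Equiv.symm_apply_eq, h.apply_leaf_self]

lemma symm_apply_leaf_self (h : IsStarRecursion σ σ' root leaf) (i : ι) (b : β) :
    (σ i).symm (leaf i b) = root ((σ' i).symm b) := by
  rw [Equiv.symm_apply_eq, h.apply_root, Equiv.apply_symm_apply]

lemma symm_apply_leaf_of_ne (h : IsStarRecursion σ σ' root leaf) {i j : ι} (hji : j ≠ i) (b : β) :
    (σ i).symm (leaf j b) = leaf j b := by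
  rw [Equiv.symm_apply_eq, h.apply_leaf_of_ne hji]

variable [Fintype ι]

variable (𝕜) in
/-- The part of the adjacency operator of a star recursion that leads from the roots to the
leaves; the part leading from the leaves to the roots is its adjoint. -/
noncomputable def rootToLeaf (σ' : ι → Equiv.Perm β) (leaf : ι → β ↪ α) :
    ℓ²(β, 𝕜) →L[𝕜] ℓ²(α, 𝕜) :=
  ∑ i, l2Extend 𝕜 (leaf i) ∘L (l2Extend 𝕜 (σ' i).toEmbedding + 1)

lemma rootToLeaf_single (σ' : ι → Equiv.Perm β) (leaf : ι → β ↪ α) (b : β) :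
    rootToLeaf 𝕜 σ' leaf (lp.single 2 b 1) =
      ∑ i, (lp.single 2 (leaf i (σ' i b)) 1 + lp.single 2 (leaf i b) 1) := by
  simp [rootToLeaf, sum_apply]

lemma adjoint_l2Extend_root_comp_rootToLeaf (h : IsStarRecursion σ σ' root leaf) :
    adjoint (l2Extend 𝕜 root) ∘L rootToLeaf 𝕜 σ' leaf = 0 :=
  clm_ext_lp_single fun b => by
    simp [rootToLeaf_single, adjoint_l2Extend_single_of_ne (h.leaf_ne_root _ _)]

lemma adjoint_rootToLeaf_comp_l2Extend_root (h : IsStarRecursion σ σ' root leaf) :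
    adjoint (rootToLeaf 𝕜 σ' leaf) ∘L l2Extend 𝕜 root = 0 := by
  simpa using congrArg adjoint (h.adjoint_l2Extend_root_comp_rootToLeaf (𝕜 := 𝕜))

lemma adjoint_rootToLeaf_single_leaf (h : IsStarRecursion σ σ' root leaf) (i : ι) (b : β) :
    adjoint (rootToLeaf 𝕜 σ' leaf) (lp.single 2 (leaf i b) 1) =
      lp.single 2 ((σ' i).symm b) 1 + lp.single 2 b 1 := by
  have hne (j : ι) (hj : j ≠ i) :
      adjoint (l2Extend 𝕜 (leaf j)) (lp.single 2 (leaf i b) 1) = 0 :=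
    adjoint_l2Extend_single_of_ne (h.leaf_ne_leaf hj.symm b)
  simp only [rootToLeaf, map_sum, adjoint_comp, map_add, adjoint_l2Extend_equiv, sum_apply,
    comp_apply]
  rw [Fintype.sum_eq_single i fun j hj => by simp [hne j hj]]
  simp [(IsSelfAdjoint.one (ℓ²(β, 𝕜) →L[𝕜] ℓ²(β, 𝕜))).adjoint_eq]

lemma adjoint_rootToLeaf_comp_self (h : IsStarRecursion σ σ' root leaf) :
    adjoint (rootToLeaf 𝕜 σ' leaf) ∘L rootToLeaf 𝕜 σ' leaf =
      algebraMap 𝕜 _ (2 * Fintype.card ι) + schreierAdj 𝕜 σ' :=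
  clm_ext_lp_single fun b => by
    simp only [comp_apply, rootToLeaf_single, Finset.sum_add_distrib, map_add, map_sum,
      h.adjoint_rootToLeaf_single_leaf, Equiv.symm_apply_apply, Finset.sum_const, Finset.card_univ,
      Algebra.algebraMap_eq_smul_one, add_apply, smul_apply, one_apply_eq_self, schreierAdj_single]
    module

lemma schreierAdj_eq_block (h : IsStarRecursion σ σ' root leaf) :
    schreierAdj 𝕜 σ =
      l2Extend 𝕜 root ∘L adjoint (rootToLeaf 𝕜 σ' leaf) +
        rootToLeaf 𝕜 σ' leaf ∘L adjoint (l2Extend 𝕜 root) +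
        (2 * (Fintype.card ι - 1) : 𝕜) • (1 - l2Extend 𝕜 root ∘L adjoint (l2Extend 𝕜 root)) := by
  refine clm_ext_lp_single fun a => ?_
  obtain ⟨b, rfl⟩ | ⟨j, b, rfl⟩ := h.exists_root_or_leaf a
  · have hB : adjoint (rootToLeaf 𝕜 σ' leaf) (lp.single 2 (root b) 1) = 0 := by
      simpa using congr($(h.adjoint_rootToLeaf_comp_l2Extend_root (𝕜 := 𝕜)) (lp.single 2 b 1))
    simp [hB, rootToLeaf_single, h.apply_root, h.symm_apply_root]
  · have hR := adjoint_l2Extend_single_of_ne (𝕜 := 𝕜) (h.leaf_ne_root j b)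
    have hfix (i : ι) (hi : i ∈ Finset.univ.erase j) :
        (lp.single 2 (σ i (leaf j b)) 1 + lp.single 2 ((σ i).symm (leaf j b)) 1 : ℓ²(α, 𝕜)) =
          (2 : 𝕜) • lp.single 2 (leaf j b) 1 := by
      have hij := (Finset.ne_of_mem_erase hi).symm
      rw [h.apply_leaf_of_ne hij, h.symm_apply_leaf_of_ne hij, two_smul]
    have hcard : ((Finset.univ.erase j).card : 𝕜) = Fintype.card ι - 1 := by
      rw [Finset.card_erase_of_mem (Finset.mem_univ j), Finset.card_univ,
        Nat.cast_pred (Fintype.card_pos_iff.2 ⟨j⟩)]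
    rw [schreierAdj_single, ← Finset.add_sum_erase _ _ (Finset.mem_univ j),
      Finset.sum_congr rfl hfix, Finset.sum_const, ← Nat.cast_smul_eq_nsmul 𝕜, hcard]
    simp only [h.apply_leaf_self, h.symm_apply_leaf_self, add_apply, comp_apply,
      h.adjoint_rootToLeaf_single_leaf, map_add, l2Extend_single, hR, map_zero, add_zero,
      smul_apply, sub_apply, one_apply_eq_self, sub_zero]
    module

lemma mem_spectrum_schreierAdj_iff (h : IsStarRecursion σ σ' root leaf) {z : 𝕜}
    (hz : z ≠ 2 * (Fintype.card ι - 1)) :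
    z ∈ spectrum 𝕜 (schreierAdj 𝕜 σ) ↔
      z * (z - 2 * (Fintype.card ι - 1)) - 2 * Fintype.card ι ∈ spectrum 𝕜 (schreierAdj 𝕜 σ') := by
  rw [h.schreierAdj_eq_block, mem_spectrum_block_iff (adjoint_l2Extend_comp_self root)
    h.adjoint_rootToLeaf_comp_l2Extend_root h.adjoint_l2Extend_root_comp_rootToLeaf hz,
    h.adjoint_rootToLeaf_comp_self,
    ← spectrum.add_mem_add_iff (s := (2 * Fintype.card ι : 𝕜)) (r := z * _ - _), sub_add_cancel]

lemma mem_spectrum_schreierAdj_of_apply_eq (h : IsStarRecursion σ σ' root leaf) {i : ι}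
    {a b : β} (hne : a ≠ b) (hab : σ' i a = b) (hba : σ' i b = a) :
    (2 * (Fintype.card ι - 1) : 𝕜) ∈ spectrum 𝕜 (schreierAdj 𝕜 σ) := by
  set f : ℓ²(α, 𝕜) := lp.single 2 (leaf i a) 1 - lp.single 2 (leaf i b) 1 with hf
  have hf0 : f ≠ 0 := by
    refine sub_ne_zero.2 fun hab' => hne ?_
    have := congr($hab' (leaf i a))
    by_contra hne
    simp [hne] at this
  have hRf : adjoint (l2Extend 𝕜 root) f = 0 := by
    simp [hf, adjoint_l2Extend_single_of_ne (h.leaf_ne_root i _)]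
  have hBf : adjoint (rootToLeaf 𝕜 σ' leaf) f = 0 := by
    have ha : (σ' i).symm a = b := by rw [Equiv.symm_apply_eq, hba]
    have hb : (σ' i).symm b = a := by rw [Equiv.symm_apply_eq, hab]
    rw [hf, map_sub, h.adjoint_rootToLeaf_single_leaf, h.adjoint_rootToLeaf_single_leaf, ha, hb,
      add_comm, sub_self]
  have hTf : schreierAdj 𝕜 σ f = (2 * (Fintype.card ι - 1) : 𝕜) • f := by
    rw [h.schreierAdj_eq_block]
    simp [hRf, hBf]
  rw [ContinuousLinearMap.spectrum_eq]
  exact (Module.End.hasEigenvalue_of_hasEigenvector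
    ⟨Module.End.mem_eigenspace_iff.2 hTf, hf0⟩).mem_spectrum

end IsStarRecursion

end StarRecursion

section Words

section Letters

variable {A : Type*}

/-- The infinite word `j u`, whose first letter is `j`. -/
def consWord (j : A) (u : ℕ → A) : ℕ → A
  | 0 => j
  | n + 1 => u n

/-- The infinite word obtained from `u` by deleting its first letter. -/
def tailWord (u : ℕ → A) : ℕ → A := fun n => u (n + 1)

lemma consWord_tailWord (u : ℕ → A) : consWord (u 0) (tailWord u) = u := by
  ext1 n
  cases n <;> rfl

lemma consWord_injective (j : A) : (consWord j).Injective := fun _ _ h =>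
  congrArg tailWord h

lemma comp_consWord (s : A → A) (j : A) (u : ℕ → A) :
    s ∘ consWord j u = consWord (s j) (s ∘ u) := by
  ext1 n
  cases n <;> rfl

end Letters

variable {p : ℕ}

lemma Ebd_consWord_zero (i : Fin (p + 1)) (u : ℕ → Fin (p + 1)) :
    Ebd p i (consWord 0 u) = consWord i (Ebd p i u) := by
  have htail : (∃ k, consWord 0 u k ≠ 0) ↔ ∃ k, u k ≠ 0 :=
    Nat.or_exists_add_one.symm.trans (or_iff_right (not_not.2 rfl))
  by_cases h : ∃ k, u k ≠ 0
  · have hfind : Nat.find (htail.2 h) = Nat.find h + 1 :=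
      Nat.find_comp_succ _ _ (not_not.2 rfl)
    have hletter : consWord 0 u (Nat.find h + 1) = u (Nat.find h) := rfl
    simp only [Ebd, dif_pos h, dif_pos (htail.2 h), hfind, hletter]
    ext1 n
    split_ifs <;> cases n <;> simp [consWord]
  · simp only [Ebd, dif_neg h, dif_neg (htail.not.2 h)]
    ext1 n
    cases n <;> rfl

lemma Ebd_consWord_of_ne_zero (i : Fin (p + 1)) {j : Fin (p + 1)} (hj : j ≠ 0)
    (u : ℕ → Fin (p + 1)) :
    Ebd p i (consWord j u) = consWord (if j = i then 0 else j) u := by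
  have h : ∃ k, consWord j u k ≠ 0 := ⟨0, hj⟩
  have hfind : Nat.find h = 0 := (Nat.find_eq_zero h).2 hj
  have hletter : consWord j u 0 = j := rfl
  simp only [Ebd, dif_pos h, hfind, hletter]
  ext1 n
  split_ifs <;> cases n <;> simp [consWord]

lemma Ebd_consWord (i j : Fin (p + 1)) (u : ℕ → Fin (p + 1)) :
    Ebd p i (consWord j u) = consWord (Equiv.swap 0 i j) (if j = 0 then Ebd p i u else u) := by
  split_ifs with hj
  · rw [hj, Ebd_consWord_zero, Equiv.swap_apply_left]
  · rw [Ebd_consWord_of_ne_zero i hj, Equiv.swap_apply_def, if_neg hj]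

/-- `E_i` is not an involution, but becomes one after exchanging the letters `0` and `i`: it then
preserves the first letter. -/
lemma involutive_Ebd_comp_swap (i : Fin (p + 1)) :
    Function.Involutive fun u : ℕ → Fin (p + 1) => Ebd p i (Equiv.swap 0 i ∘ u) := by
  set τ := fun u : ℕ → Fin (p + 1) => Ebd p i (Equiv.swap 0 i ∘ u) with hτ
  have hcons (j : Fin (p + 1)) (u : ℕ → Fin (p + 1)) :
      τ (consWord j u) = consWord j (if j = i then τ u else Equiv.swap 0 i ∘ u) := by
    simp only [hτ, comp_consWord, Ebd_consWord, Equiv.swap_apply_self, Equiv.swap_apply_eq_iff,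
      Equiv.swap_apply_left]
  have hsq (j : Fin (p + 1)) (u : ℕ → Fin (p + 1)) :
      τ (τ (consWord j u)) = consWord j (if j = i then τ (τ u) else u) := by
    by_cases hj : j = i
    · simp [hcons, hj]
    · have hinv : Equiv.swap 0 i ∘ Equiv.swap 0 i ∘ u = u := by
        simp [← Function.comp_assoc, ← Equiv.coe_trans]
      simp [hcons, hj, hinv]
  intro u
  funext n
  induction n generalizing u with
  | zero => rw [← consWord_tailWord u, hsq]; rfl
  | succ n ih =>
    rw [← consWord_tailWord u, hsq]
    split_ifs
    · exact ih _
    · rfl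

lemma bijective_Ebd (i : Fin (p + 1)) : (Ebd p i).Bijective := by
  have hswap : (fun u : ℕ → Fin (p + 1) => Equiv.swap 0 i ∘ u).Bijective :=
    ((Equiv.refl ℕ).arrowCongr (Equiv.swap 0 i)).bijective
  exact (Function.Bijective.of_comp_iff _ hswap).1 (involutive_Ebd_comp_swap i).bijective

instance : Std.Symm (StarStep p) := ⟨fun _ _ => Exists.imp fun _ => Or.symm⟩

lemma equivalence_mem_starOrbit :
    Equivalence fun u v : ℕ → Fin (p + 1) => v ∈ StarOrbit p u where
  refl _ := .refl
  symm := symm_of (Relation.ReflTransGen (StarStep p))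
  trans := .trans

lemma Ebd_mem_starOrbit_iff (i : Fin p) {u w : ℕ → Fin (p + 1)} :
    Ebd p i.succ u ∈ StarOrbit p w ↔ u ∈ StarOrbit p w :=
  ⟨(.tail · ⟨i, .inr rfl⟩), (.tail · ⟨i, .inl rfl⟩)⟩

lemma map_mem_starOrbit {φ : (ℕ → Fin (p + 1)) → ℕ → Fin (p + 1)}
    (hφ : ∀ (i : Fin p) u, φ (Ebd p i.succ u) ∈ StarOrbit p (φ u)) {u w : ℕ → Fin (p + 1)}
    (hu : u ∈ StarOrbit p w) : φ u ∈ StarOrbit p (φ w) := by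
  refine Relation.reflTransGen_le_of_equivalence_of_le (equivalence_mem_starOrbit.comap φ) ?_ _ _ hu
  rintro u _ ⟨i, rfl | rfl⟩
  · exact hφ i u
  · exact equivalence_mem_starOrbit.symm (hφ i _)

lemma consWord_mem_starOrbit_iff_zero (j : Fin (p + 1)) {u w : ℕ → Fin (p + 1)} :
    consWord j u ∈ StarOrbit p w ↔ consWord 0 u ∈ StarOrbit p w := by
  cases j using Fin.cases with
  | zero => rfl
  | succ i => rw [← Ebd_mem_starOrbit_iff i, Ebd_consWord_of_ne_zero _ i.succ_ne_zero, if_pos rfl]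

lemma consWord_mem_starOrbit_iff (j : Fin (p + 1)) {u w : ℕ → Fin (p + 1)} :
    consWord j u ∈ StarOrbit p w ↔ u ∈ StarOrbit p (tailWord w) := by
  constructor
  · refine map_mem_starOrbit (φ := tailWord) (u := consWord j u) fun i v => ?_
    rw [← consWord_tailWord v, Ebd_consWord]
    change ite _ _ _ ∈ StarOrbit p (tailWord v)
    split_ifs
    · exact (Ebd_mem_starOrbit_iff i).2 .refl
    · exact .refl
  · intro hu
    rw [consWord_mem_starOrbit_iff_zero, ← consWord_mem_starOrbit_iff_zero (w 0),
      ← consWord_tailWord w]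
    refine map_mem_starOrbit (φ := consWord (w 0)) (fun i v => ?_) hu
    rw [consWord_mem_starOrbit_iff_zero, ← consWord_mem_starOrbit_iff_zero i.succ,
      ← Ebd_consWord_zero, Ebd_mem_starOrbit_iff, ← consWord_mem_starOrbit_iff_zero (w 0)]
    exact .refl

end Words

section Orbit

open scoped lp

variable {p : ℕ} (w : ℕ → Fin (p + 1))

/-- The permutation of the orbit of `w` induced by the generator `E_{i+1}`. -/
noncomputable def orbitPerm (i : Fin p) : Equiv.Perm (StarOrbit p w) :=
  Equiv.Perm.subtypePerm (Equiv.ofBijective (Ebd p i.succ) (bijective_Ebd i.succ)) fun _ =>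
    Ebd_mem_starOrbit_iff i

/-- Prepending the letter `j`, as an embedding of the orbit of `tailWord w` into that of `w`. -/
def orbitCons (j : Fin (p + 1)) : StarOrbit p (tailWord w) ↪ StarOrbit p w where
  toFun u := ⟨consWord j u, (consWord_mem_starOrbit_iff j).2 u.2⟩
  inj' _ _ h := Subtype.ext (consWord_injective j (congrArg Subtype.val h))

@[simp]
lemma coe_orbitPerm (i : Fin p) (u : StarOrbit p w) :
    (orbitPerm w i u : ℕ → Fin (p + 1)) = Ebd p i.succ u := rfl

@[simp]
lemma coe_orbitCons (j : Fin (p + 1)) (u : StarOrbit p (tailWord w)) :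
    (orbitCons w j u : ℕ → Fin (p + 1)) = consWord j u := rfl

lemma isStarRecursion_orbitPerm :
    IsStarRecursion (orbitPerm w) (orbitPerm (tailWord w)) (orbitCons w 0)
      (fun i : Fin p => orbitCons w i.succ) where
  exists_root_or_leaf u := by
    have hu : consWord ((u : ℕ → Fin (p + 1)) 0) (tailWord u) = u := consWord_tailWord _
    obtain ⟨v, hv⟩ : ∃ v, orbitCons w ((u : ℕ → Fin (p + 1)) 0) v = u :=
      ⟨⟨tailWord u, (consWord_mem_starOrbit_iff _).1 (hu ▸ u.2)⟩, Subtype.ext hu⟩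
    generalize (u : ℕ → Fin (p + 1)) 0 = j at hv
    cases j using Fin.cases with
    | zero => exact .inl ⟨v, hv⟩
    | succ i => exact .inr ⟨i, v, hv⟩
  leaf_ne_root i u v h := i.succ_ne_zero (congrFun (congrArg Subtype.val h) 0)
  apply_root i u := Subtype.ext (Ebd_consWord_zero i.succ u)
  apply_leaf_self i u := Subtype.ext <| by
    simp [Ebd_consWord_of_ne_zero]
  apply_leaf_of_ne hji u := Subtype.ext <| by
    simp [Ebd_consWord_of_ne_zero, hji]

lemma eq_schreierAdj_orbitPerm {T : ℓ²(StarOrbit p w, ℂ) →L[ℂ] ℓ²(StarOrbit p w, ℂ)}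
    (hT : ∀ (f : ℓ²(StarOrbit p w, ℂ)) (u : StarOrbit p w),
      T f u = ∑ i : Fin p,
        ((∑' v : StarOrbit p w,
            if Ebd p i.succ (u : ℕ → Fin (p + 1)) = (v : ℕ → Fin (p + 1)) then f v else 0) +
         (∑' v : StarOrbit p w,
            if Ebd p i.succ (v : ℕ → Fin (p + 1)) = (u : ℕ → Fin (p + 1)) then f v else 0))) :
    T = schreierAdj ℂ (orbitPerm w) := by
  ext f u
  rw [hT, schreierAdj_apply]
  refine Finset.sum_congr rfl fun i _ => congrArg₂ _ ?_ ?_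
  · simp only [← coe_orbitPerm, Subtype.coe_inj]
    exact tsum_ite_eq' _ _
  · simp only [← coe_orbitPerm, Subtype.coe_inj, ← Equiv.eq_symm_apply]
    exact tsum_ite_eq _ _

/-- For `i ≠ j` the generator `E_i` fixes the words `j u`, hence exchanges `0 j u` and `i j u`; on
these two words the second generation of leaves carries an eigenvector. -/
lemma two_mul_sub_one_mem_spectrum_orbitPerm (hp : 2 ≤ p) :
    (2 * (p - 1) : ℂ) ∈ spectrum ℂ (schreierAdj ℂ (orbitPerm w)) := by
  have : Nontrivial (Fin p) := Fin.nontrivial_iff_two_le.2 hp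
  obtain ⟨i, j, hij⟩ := exists_pair_ne (Fin p)
  have h₁ := isStarRecursion_orbitPerm (tailWord w)
  have h₂ := isStarRecursion_orbitPerm (tailWord (tailWord w))
  let v := orbitCons (tailWord (tailWord w)) j.succ ⟨_, .refl⟩
  have hv : orbitPerm (tailWord (tailWord w)) i v = v := h₂.apply_leaf_of_ne hij.symm _
  have hroot : orbitPerm (tailWord w) i (orbitCons _ 0 v) = orbitCons _ i.succ v := by
    rw [h₁.apply_root, hv]
  simpa using (isStarRecursion_orbitPerm w).mem_spectrum_schreierAdj_of_apply_eq (𝕜 := ℂ)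
    (h₁.leaf_ne_root i v v) (h₁.apply_leaf_self i v) hroot

end Orbit

section BackwardOrbits

open Function

variable {X : Type*} [PseudoMetricSpace X] {f : X → X} {K : Set X} {c : X} {r : ℝ}

/-- The inverse branches of `f` that follow the orbit of `x` pull `c` back to a point close to
`x`. -/
lemma exists_iterate_eq_dist_le (hr : 0 ≤ r) (hc : c ∈ K)
    (hf : ∀ x ∈ K, f x ∈ K → ∀ z ∈ K, ∃ y ∈ K, f y = z ∧ dist x y ≤ r * dist (f x) z)
    (n : ℕ) {x : X} (hx : ∀ m, f^[m] x ∈ K) :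
    ∃ y ∈ K, f^[n] y = c ∧ dist x y ≤ r ^ n * dist (f^[n] x) c := by
  induction n generalizing x with
  | zero => exact ⟨c, hc, rfl, by simp⟩
  | succ n ih =>
    obtain ⟨z, hzK, hzc, hz⟩ := ih (x := f x) fun m => hx (m + 1)
    obtain ⟨y, hyK, rfl, hy⟩ := hf x (hx 0) (hx 1) z hzK
    refine ⟨y, hyK, hzc, hy.trans ?_⟩
    rw [pow_succ', mul_assoc]
    exact mul_le_mul_of_nonneg_left hz hr

lemma mem_closure_iUnion_preimage_iterate (hK : Bornology.IsBounded K) (hr : 0 ≤ r) (hr1 : r < 1)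
    (hc : c ∈ K)
    (hf : ∀ x ∈ K, f x ∈ K → ∀ z ∈ K, ∃ y ∈ K, f y = z ∧ dist x y ≤ r * dist (f x) z)
    {x : X} (hx : ∀ n, f^[n] x ∈ K) : x ∈ closure (⋃ n, f^[n] ⁻¹' {c}) := by
  obtain ⟨D, hD⟩ := Metric.isBounded_iff.1 hK
  refine Metric.mem_closure_iff.2 fun ε hε => ?_
  have hlim : Filter.Tendsto (fun n : ℕ => r ^ n * D) Filter.atTop (nhds 0) := by
    simpa using (tendsto_pow_atTop_nhds_zero_of_lt_one hr hr1).mul_const D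
  obtain ⟨n, hn⟩ := (hlim.eventually_lt_const hε).exists
  obtain ⟨y, -, hyc, hxy⟩ := exists_iterate_eq_dist_le hr hc hf n hx
  exact ⟨y, Set.mem_iUnion.2 ⟨n, hyc⟩, (hxy.trans (by gcongr; exact hD (hx n) hc)).trans_lt hn⟩

lemma eq_closure_iUnion_preimage_iterate {I : Type*} {τ : I → I} {S : I → Set X}
    (hS : ∀ i, IsClosed (S i)) (hSK : ∀ i, S i ⊆ K) (hcS : ∀ i, c ∈ S i)
    (hSτ : ∀ i, ∀ x ≠ c, x ∈ S i ↔ f x ∈ S (τ i))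
    (hK : Bornology.IsBounded K) (hr : 0 ≤ r) (hr1 : r < 1)
    (hf : ∀ x ∈ K, f x ∈ K → ∀ z ∈ K, ∃ y ∈ K, f y = z ∧ dist x y ≤ r * dist (f x) z) (i : I) :
    S i = closure (⋃ n, f^[n] ⁻¹' {c}) := by
  refine subset_antisymm (fun x hx => ?_) (closure_minimal (Set.iUnion_subset fun n => ?_) (hS i))
  · by_cases hxc : ∃ n, f^[n] x = c
    · exact subset_closure (Set.mem_iUnion.2 hxc)
    push Not at hxc
    have horbit (n : ℕ) : f^[n] x ∈ S (τ^[n] i) := by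
      induction n with
      | zero => exact hx
      | succ n ih =>
        rw [iterate_succ_apply', iterate_succ_apply', ← hSτ _ _ (hxc n)]
        exact ih
    exact mem_closure_iUnion_preimage_iterate hK hr hr1 (hSK i (hcS i)) hf fun n =>
      hSK _ (horbit n)
  · induction n generalizing i with
    | zero => rintro _ rfl; exact hcS i
    | succ n ih =>
      intro x hx
      by_cases hxc : x = c
      · exact hxc ▸ hcS i
      · exact (hSτ i x hxc).2 (ih (τ i) hx)

end BackwardOrbits

section QuadraticMap

lemma exists_sq_eq_abs_sub_mul_le {m t u : ℝ} (ht : m ≤ |t|) (hu : m ^ 2 ≤ u) :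
    ∃ s, s ^ 2 = u ∧ |t - s| * (2 * m) ≤ |t ^ 2 - u| := by
  have hsq : √u ^ 2 = u := Real.sq_sqrt ((sq_nonneg m).trans hu)
  have hmu : m ≤ √u := Real.le_sqrt_of_sq_le hu
  obtain ⟨s, hs, hts⟩ : ∃ s, s ^ 2 = u ∧ 2 * m ≤ |t + s| := by
    rcases le_total 0 t with h | h
    · rw [abs_of_nonneg h] at ht
      exact ⟨√u, hsq, (by linarith : 2 * m ≤ t + √u).trans (le_abs_self _)⟩
    · rw [abs_of_nonpos h] at ht
      exact ⟨-√u, by rw [neg_sq, hsq],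
        (by linarith : 2 * m ≤ -(t + -√u)).trans (neg_le_abs _)⟩
  refine ⟨s, hs, ?_⟩
  calc |t - s| * (2 * m) ≤ |t - s| * |t + s| := by gcongr
    _ = |t ^ 2 - u| := by rw [← abs_mul, ← hs]; congr 1; ring

lemma exists_fp_eq_dist_le {p : ℕ} (hp : 2 ≤ p) {x z : ℝ}
    (hfx : fp p x ∈ Metric.closedBall 0 (2 * p : ℝ)) (hz : z ∈ Metric.closedBall 0 (2 * p : ℝ)) :
    ∃ y ∈ Metric.closedBall 0 (2 * p : ℝ), fp p y = z ∧ dist x y ≤ 1 / 2 * dist (fp p x) z := by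
  have hp' : (2 : ℝ) ≤ p := mod_cast hp
  have hvertex (t : ℝ) : fp p (p - 1 + t) = t ^ 2 - (p ^ 2 + 1) := by simp only [fp]; ring
  obtain ⟨t, rfl⟩ : ∃ t, x = p - 1 + t := ⟨x - (p - 1), by ring⟩
  simp only [mem_closedBall_zero_iff, Real.norm_eq_abs, abs_le, hvertex] at hfx hz ⊢
  have ht : (p - 1 : ℝ) ≤ |t| := by
    rw [← abs_of_nonneg (by linarith : (0 : ℝ) ≤ p - 1)]
    exact sq_le_sq.1 (by linarith)
  obtain ⟨s, hs, hts⟩ := exists_sq_eq_abs_sub_mul_le (m := p - 1) (t := t) (u := z + (p ^ 2 + 1))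
    ht (by linarith)
  have hs' : |s| ≤ p + 1 := abs_le_of_sq_le_sq (by linarith) (by linarith)
  refine ⟨p - 1 + s, ?_, by rw [hvertex]; linarith, ?_⟩
  · constructor <;> linarith [abs_le.1 hs']
  · rw [Real.dist_eq, Real.dist_eq, add_sub_add_left_eq_sub, sub_sub, add_comm _ z]
    nlinarith [abs_nonneg (t - s)]

end QuadraticMap

section Spectrum

variable {p : ℕ} (w : ℕ → Fin (p + 1))

lemma abs_le_of_mem_spectrum_orbitPerm {x : ℝ}
    (hx : (x : ℂ) ∈ spectrum ℂ (schreierAdj ℂ (orbitPerm w))) : |x| ≤ 2 * p := by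
  simpa using norm_le_of_mem_spectrum_schreierAdj hx

lemma mem_spectrum_orbitPerm_iff_fp {x : ℝ} (hx : x ≠ 2 * (p - 1)) :
    (x : ℂ) ∈ spectrum ℂ (schreierAdj ℂ (orbitPerm w)) ↔
      (fp p x : ℂ) ∈ spectrum ℂ (schreierAdj ℂ (orbitPerm (tailWord w))) := by
  have hfp : (fp p x : ℂ) = x * (x - 2 * (p - 1)) - 2 * p := by
    simp only [fp]
    push_cast
    ring
  have hx' : (x : ℂ) ≠ 2 * (Fintype.card (Fin p) - 1) := by
    rw [Fintype.card_fin]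
    exact_mod_cast hx
  rw [(isStarRecursion_orbitPerm w).mem_spectrum_schreierAdj_iff hx', hfp, Fintype.card_fin]

lemma real_spectrum_orbitPerm_eq (hp : 2 ≤ p) :
    {x : ℝ | (x : ℂ) ∈ spectrum ℂ (schreierAdj ℂ (orbitPerm w))} =
      closure (⋃ n, (fp p)^[n] ⁻¹' {2 * ((p : ℝ) - 1)}) :=
  eq_closure_iUnion_preimage_iterate (r := 1 / 2)
    (S := fun v => {x : ℝ | (x : ℂ) ∈ spectrum ℂ (schreierAdj ℂ (orbitPerm v))})
    (K := Metric.closedBall 0 (2 * p)) (τ := tailWord)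
    (fun _ => (spectrum.isClosed _).preimage Complex.continuous_ofReal)
    (fun v x hx => mem_closedBall_zero_iff.2 (abs_le_of_mem_spectrum_orbitPerm v hx))
    (fun v => by simpa using two_mul_sub_one_mem_spectrum_orbitPerm v hp)
    (fun v _ hx => mem_spectrum_orbitPerm_iff_fp v hx)
    Metric.isBounded_closedBall (by norm_num) (by norm_num)
    (fun _ _ hfx _ hz => exists_fp_eq_dist_le hp hfx hz) w

end Spectrum

/-- Let `p ≥ 2`, `w ∈ X^ℕ` and let `T` be the adjacency operator of the orbital Schreier
graph `Γ_w` on `H = ℓ²(Orb(w); ℂ)`, `(Tf)(u) = Σ_{i=1}^p (f(E_i(u)) + f(E_i^{-1}(u)))`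
(the two summands being encoded as sums over the orbit of the indicator of `E_i(u) = v`,
resp. `E_i(v) = u`). Then `T` is self-adjoint and its spectrum, as a subset of `ℝ`, is the
closure of `⋃_{n ≥ 0} {λ : f_p^{∘n}(λ) = 2(p−1)}`. -/
theorem stmt12 (p : ℕ) (hp : 2 ≤ p) (w : ℕ → Fin (p + 1))
    (T : lp (fun _ : StarOrbit p w => ℂ) 2 →L[ℂ] lp (fun _ : StarOrbit p w => ℂ) 2)
    (hT : ∀ (f : lp (fun _ : StarOrbit p w => ℂ) 2) (u : StarOrbit p w),
      T f u = ∑ i : Fin p,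
        ((∑' v : StarOrbit p w,
            if Ebd p i.succ (u : ℕ → Fin (p + 1)) = (v : ℕ → Fin (p + 1)) then f v else 0) +
         (∑' v : StarOrbit p w,
            if Ebd p i.succ (v : ℕ → Fin (p + 1)) = (u : ℕ → Fin (p + 1)) then f v else 0))) :
    IsSelfAdjoint T ∧
      {x : ℝ | (x : ℂ) ∈ spectrum ℂ T} =
        closure (⋃ n : ℕ, {lam : ℝ | (fp p)^[n] lam = 2 * ((p : ℝ) - 1)}) := by
  obtain rfl := eq_schreierAdj_orbitPerm w hT
  exact ⟨isSelfAdjoint_schreierAdj _, real_spectrum_orbitPerm_eq w hp⟩
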